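/- For every Y₀ ∈ [0,1) there exist α₀ < −1, λ ∈ (0, π), and a ≠ 0 such that, setting θ₀ = √(−α₀) and θ₁ = √(−α₀−1), the bifurcation condition a²·sin²λ·(θ₁·cot θ₁ − θ₀·cot λ) = 1 holds and the background current U₀(Y) = a·sin(θ₀(Y−1)+λ) satisfies U₀(Y₀) = 0. -/

import Mathlib

/-!
Put `d = 1 - Y₀ ∈ (0,1]`. Taking `θ₀ = (λ + (k - 1)π) / d` with `k = 1` or `k = 2` makes
`U₀(Y₀) = 0` automatically, and `a` can be solved for as soon as
`θ₁ cot θ₁ - θ₀ cot λ > 0`. As `λ ↑ π` the term `-θ₀ cot λ` tends to `+∞`, so this holds for `λ`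
close to `π` unless `cot θ₁` blows up at the same time, that is, unless
`(kπ/d)² - 1 = n²π²` for some integer `n` (`stagnation_of_sin_ne_zero`). This resonance cannot
occur both for `k = 1` and for `k = 2`: otherwise `(m² - 4n²)π² = 3`, which is impossible since
`π² > 3` (`sin_ne_zero_or`).
-/

/-- For given `x = π / d`, at most one of the two limiting values of `θ₁`, belonging to `θ₀ = x`
and `θ₀ = 2x`, is a pole of the cotangent. -/
lemma sin_ne_zero_or (x : ℝ) (hx : 1 < x) :
    Real.sin (Real.sqrt (x ^ 2 - 1)) ≠ 0 ∨ Real.sin (Real.sqrt ((2 * x) ^ 2 - 1)) ≠ 0 := by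
  by_contra! h
  obtain ⟨n, hn⟩ := Real.sin_eq_zero_iff.1 h.1
  obtain ⟨m, hm⟩ := Real.sin_eq_zero_iff.1 h.2
  have h1 : ((n : ℝ) * Real.pi) ^ 2 = x ^ 2 - 1 := by
    rw [hn, Real.sq_sqrt (by nlinarith)]
  have h2 : ((m : ℝ) * Real.pi) ^ 2 = (2 * x) ^ 2 - 1 := by
    rw [hm, Real.sq_sqrt (by nlinarith)]
  have h3 : ((m ^ 2 - 4 * n ^ 2 : ℤ) : ℝ) * Real.pi ^ 2 = 3 := by
    push_cast
    linarith
  have hpi := Real.pi_gt_three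
  have hpos : (0 : ℝ) < ((m ^ 2 - 4 * n ^ 2 : ℤ) : ℝ) := by
    by_contra! hle
    nlinarith [mul_nonneg (neg_nonneg.2 hle) (sq_nonneg Real.pi)]
  have hge : (1 : ℝ) ≤ ((m ^ 2 - 4 * n ^ 2 : ℤ) : ℝ) := by
    exact_mod_cast Int.cast_pos.1 hpos
  nlinarith

/-- If the limiting value `√((kπ/d)² - 1)` of `θ₁` as `λ ↑ π` is not a pole of the cotangent, the
level `1 - d` is a stagnation level. -/
lemma stagnation_of_sin_ne_zero (d : ℝ) (hd : 0 < d) (hd1 : d ≤ 1) (k : ℕ) (hk : 1 ≤ k)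
    (hs : Real.sin (Real.sqrt ((k * (Real.pi / d)) ^ 2 - 1)) ≠ 0) :
    ∃ α₀ lam a : ℝ, α₀ < -1 ∧ lam ∈ Set.Ioo 0 Real.pi ∧ a ≠ 0 ∧
      a ^ 2 * Real.sin lam ^ 2 *
        (Real.sqrt (-α₀ - 1) * Real.cot (Real.sqrt (-α₀ - 1)) -
          Real.sqrt (-α₀) * Real.cot lam) = 1 ∧
      a * Real.sin (Real.sqrt (-α₀) * (-d) + lam) = 0 := by
  have hpi := Real.pi_gt_three
  have hk' : (1 : ℝ) ≤ k := by exact_mod_cast hk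
  let θ : ℝ → ℝ := fun l => (l + (k - 1) * Real.pi) / d
  have hθpi : θ Real.pi = k * (Real.pi / d) := by
    simp only [θ]
    ring
  have hθ1 : 1 < θ Real.pi := by
    rw [hθpi]
    have h : 3 < Real.pi / d := by
      rw [lt_div_iff₀ hd]
      nlinarith
    nlinarith
  have hθc : Continuous θ := by fun_prop
  -- `sin λ` times the bracket of the bifurcation condition: unlike the bracket, it is continuous
  -- at `λ = π`, where its value is `θ₀ > 0`.
  let P : ℝ → ℝ := fun l =>
    Real.sin l * (Real.sqrt (θ l ^ 2 - 1) *
      (Real.cos (Real.sqrt (θ l ^ 2 - 1)) / Real.sin (Real.sqrt (θ l ^ 2 - 1)))) -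
      θ l * Real.cos l
  have hPc : ContinuousAt P Real.pi := by
    have hr : Continuous fun l => Real.sqrt (θ l ^ 2 - 1) := by fun_prop
    have hq : ContinuousAt (fun l => Real.cos (Real.sqrt (θ l ^ 2 - 1)) /
        Real.sin (Real.sqrt (θ l ^ 2 - 1))) Real.pi :=
      (Real.continuous_cos.comp' hr).continuousAt.div
        (Real.continuous_sin.comp' hr).continuousAt (by rwa [hθpi])
    exact (Real.continuous_sin.continuousAt.mul (hr.continuousAt.mul hq)).sub
      (hθc.mul Real.continuous_cos).continuousAt
  have hPpi : 0 < P Real.pi := by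
    simp only [P, Real.sin_pi, Real.cos_pi]
    linarith
  have e1 : ∀ᶠ l in nhdsWithin Real.pi (Set.Iio Real.pi), 0 < P l :=
    (hPc.eventually (lt_mem_nhds hPpi)).filter_mono nhdsWithin_le_nhds
  have e2 : ∀ᶠ l in nhdsWithin Real.pi (Set.Iio Real.pi), 1 < θ l :=
    (hθc.continuousAt.eventually (lt_mem_nhds hθ1)).filter_mono nhdsWithin_le_nhds
  have e3 : ∀ᶠ l in nhdsWithin Real.pi (Set.Iio Real.pi), 0 < l :=
    (lt_mem_nhds Real.pi_pos).filter_mono nhdsWithin_le_nhds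
  obtain ⟨l, ⟨⟨hP, hθl⟩, hl0⟩, hlpi⟩ :=
    (((e1.and e2).and e3).and self_mem_nhdsWithin).exists
  have hsin : 0 < Real.sin l := Real.sin_pos_of_pos_of_lt_pi hl0 hlpi
  have hprod : 0 < Real.sin l * P l := mul_pos hsin hP
  have hroot : Real.sqrt (- -(θ l ^ 2)) = θ l := by
    rw [neg_neg, Real.sqrt_sq (by linarith)]
  refine ⟨-(θ l ^ 2), l, (Real.sqrt (Real.sin l * P l))⁻¹, by nlinarith, ⟨hl0, hlpi⟩,
    inv_ne_zero (Real.sqrt_pos.2 hprod).ne', ?_, ?_⟩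
  · rw [hroot, neg_neg, inv_pow, Real.sq_sqrt hprod.le, Real.cot_eq_cos_div_sin,
      Real.cot_eq_cos_div_sin, mul_assoc, inv_mul_eq_one₀ hprod.ne']
    simp only [P]
    generalize Real.cos (Real.sqrt (θ l ^ 2 - 1)) / Real.sin (Real.sqrt (θ l ^ 2 - 1)) = q
    field_simp
  · have harg : Real.sqrt (- -(θ l ^ 2)) * (-d) + l = -(((k - 1 : ℤ) : ℝ) * Real.pi) := by
      rw [hroot]
      simp only [θ]
      push_cast
      field_simp
      ring
    rw [harg, Real.sin_neg, Real.sin_int_mul_pi, neg_zero, mul_zero]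

/-- Stagnation for wave class 1 (laminar vorticity `α₀ < −1`): every level
`Y₀ ∈ [0,1)` is the zero of an admissible background current, i.e. there are
`α₀ < −1`, `λ ∈ (0,π)` and `a ≠ 0` satisfying the bifurcation condition such
that `U₀(Y₀) = 0`. -/
theorem stagnation_any_level (Y₀ : ℝ) (hY₀ : Y₀ ∈ Set.Ico (0:ℝ) 1) :
    ∃ α₀ lam a : ℝ, α₀ < -1 ∧ lam ∈ Set.Ioo 0 Real.pi ∧ a ≠ 0 ∧
      a ^ 2 * Real.sin lam ^ 2 *
        (Real.sqrt (-α₀ - 1) * Real.cot (Real.sqrt (-α₀ - 1)) -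
          Real.sqrt (-α₀) * Real.cot lam) = 1 ∧
      a * Real.sin (Real.sqrt (-α₀) * (Y₀ - 1) + lam) = 0 := by
  obtain ⟨h0, h1⟩ := hY₀
  have hd : 0 < 1 - Y₀ := by linarith
  have hx : 1 < Real.pi / (1 - Y₀) := by
    rw [lt_div_iff₀ hd]
    linarith [Real.pi_gt_three]
  rw [show Y₀ - 1 = -(1 - Y₀) by ring]
  rcases sin_ne_zero_or _ hx with h | h
  · exact stagnation_of_sin_ne_zero _ hd (by linarith) 1 le_rfl (by simpa using h)
  · exact stagnation_of_sin_ne_zero _ hd (by linarith) 2 one_le_two (by simpa using h)
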